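/- Suppose that for every β > 0 an eigen-measure ν_β for (α,β) with exponent P(β) is given. Then, as β → +∞: if α > 1, ν_β([0*₀])/ν_β([1*₁]) → 1; if α = 1, ν_β([0*₀])/ν_β([1*₁]) → (1+√5)/2; and if 0 < α < 1, (1/β)·log( ν_β([0*₀])/ν_β([1*₁]) ) → 1 − α, so in particular the ratio tends to +∞ with exponential speed 1 − α. -/

import Mathlib

/-! Let `r_n` be the `ν`-measure of the ring `[aⁿ*]`, where `a ∈ {0,1}` and `[a⁰*]` is the
complement of `[a]`, and let `c` be the weight of `a` (`c = 1` for `a = 0`, `c = 3` for `a = 1`).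
Testing the eigen-measure equation on indicators of rings gives
`e^P r_{n+1} = e^{-cβ/2^{n+1}} r_n` (`ring_step`); since `P > 0`, the point `a^∞` has measure zero,
so `∑ r_n = 1`. With `p = e^P - 1` and `b = cβ`, summing the recursion yields
`1 - r_0 = r_0 e^{-b} (1/p + E)` with `0 ≤ E ≤ b e^{b/2}` (`symbol_eq`).

Write `s = 1 - ν[0]`, `t = 1 - ν[1]`. The symbol `2` gives `s + t = 1 + e^{-P-αβ}`, and the ratio of
interest is `R = e^β s / t`. Eliminating `p` between the equations for `0` and `1` gives the
self-consistency relation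
`R = θ / R + e^{(1-α)β} δ + η` with `θ → 1`, `δ → 1`, `η → 0` (`ratio_relation`),
because `p = O(e^{-β})` and `s → 0`. For `α ≥ 1` it is a quadratic equation for `R` whose positive
root converges; for `α < 1` the term `e^{(1-α)β}` dominates. -/

open MeasureTheory Filter Topology

noncomputable section

/-- The full shift space `Σ = {0,1,2}^ℕ`. -/
abbrev Sig : Type := ℕ → Fin 3

/-- The shift map `σ`. -/
def shift (x : Sig) : Sig := fun n => x (n + 1)

/-- The fixed point `0^∞`. -/
def zeroSeq : Sig := fun _ => 0

/-- The fixed point `1^∞`. -/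
def oneSeq : Sig := fun _ => 1

/-- Prepending a symbol: `a·x = (a, x₀, x₁, …)`. -/
def cons (a : Fin 3) (x : Sig) : Sig := fun n => Nat.casesOn n a x

open Classical in
/-- The metric `d(x,y) = (1/2)^(min{n : x n ≠ y n})`, with `d(x,x) = 0`. -/
def dist3 (x y : Sig) : ℝ :=
  if h : x ≠ y then (1 / 2 : ℝ) ^ Nat.find (Function.ne_iff.mp h) else 0

/-- The potential `A_α`. -/
def pot (α : ℝ) (x : Sig) : ℝ :=
  if x 0 = 0 then -dist3 x zeroSeq
  else if x 0 = 1 then -(3 * dist3 x oneSeq)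
  else -α

/-- The transfer operator `L_β` (for parameter `α`). -/
def transfer (α β : ℝ) (f : Sig → ℝ) : Sig → ℝ :=
  fun x => ∑ a : Fin 3, Real.exp (β * pot α (cons a x)) * f (cons a x)

/-- The ring `[a^n *_a] = {x : x_i = a for i < n, x_n ≠ a}`. -/
def ringSet (a : Fin 3) (n : ℕ) : Set Sig := {x | (∀ i < n, x i = a) ∧ x n ≠ a}

/-- The cylinder `[a] = {x : x₀ = a}`. -/
def cyl (a : Fin 3) : Set Sig := {x | x 0 = a}

/-- `H` is locally ring-constant: constant on `[2]` and on each ring `[0^m*₀]`, `[1^m*₁]`. -/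
def LocallyRingConstant (H : Sig → ℝ) : Prop :=
  (∀ x ∈ cyl 2, ∀ y ∈ cyl 2, H x = H y) ∧
  (∀ m : ℕ, 1 ≤ m → ∀ x ∈ ringSet 0 m, ∀ y ∈ ringSet 0 m, H x = H y) ∧
  (∀ m : ℕ, 1 ≤ m → ∀ x ∈ ringSet 1 m, ∀ y ∈ ringSet 1 m, H x = H y)

/-- An eigen-measure for `(α,β)` with exponent `P`:  a Borel probability measure `ν`
with `P > 0` and `∫ L_β f dν = e^P ∫ f dν` for every continuous `f`. -/
structure IsEigenMeasure (α β P : ℝ) (ν : Measure Sig) : Prop where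
  P_pos : 0 < P
  prob : IsProbabilityMeasure ν
  eigenMeas : ∀ f : Sig → ℝ, Continuous f →
    ∫ x, transfer α β f x ∂ν = Real.exp P * ∫ x, f x ∂ν

/-- Eigen-data `(P, H, ν)` for `(α,β)`. -/
structure IsEigenData (α β P : ℝ) (H : Sig → ℝ) (ν : Measure Sig) : Prop where
  P_pos : 0 < P
  H_cont : Continuous H
  H_pos : ∀ x, 0 < H x
  eigenFun : ∀ x, transfer α β H x = Real.exp P * H x
  prob : IsProbabilityMeasure ν
  eigenMeas : ∀ f : Sig → ℝ, Continuous f →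
    ∫ x, transfer α β f x ∂ν = Real.exp P * ∫ x, f x ∂ν

/-- The Gibbs measure `μ(B) = (∫_B H dν)/(∫ H dν)`. -/
def gibbs (H : Sig → ℝ) (ν : Measure Sig) : Measure Sig :=
  (ν.withDensity (fun x => ENNReal.ofReal (H x)) Set.univ)⁻¹ •
    ν.withDensity (fun x => ENNReal.ofReal (H x))

/-- Weak convergence (as `β → +∞`) of a family of measures to a measure `μ∞`:
convergence of integrals of every bounded continuous function. -/
def WeakLimit (μ : ℝ → Measure Sig) (μlim : Measure Sig) : Prop :=
  ∀ f : Sig → ℝ, Continuous f → (∃ C : ℝ, ∀ x, |f x| ≤ C) →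
    Tendsto (fun β => ∫ x, f x ∂(μ β)) atTop (nhds (∫ x, f x ∂μlim))

/-- `F(Z,β) = Σ_{k=0}^∞ e^{−kZ}·e^{β/2^{k+1}}`. -/
def Ffun (Z β : ℝ) : ℝ := ∑' k : ℕ, Real.exp (-(k : ℝ) * Z) * Real.exp (β / 2 ^ (k + 1))

/-- `Fpartial Z β m = F_{m-1}(Z,β) = Σ_{k=0}^{m-1} e^{−kZ}·e^{β/2^{k+1}}` (so `Fpartial Z β 0 = F_{-1} = 0`). -/
def Fpartial (Z β : ℝ) (m : ℕ) : ℝ :=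
  ∑ k ∈ Finset.range m, Real.exp (-(k : ℝ) * Z) * Real.exp (β / 2 ^ (k + 1))

/-! ### Measures of rings -/

/-- The cylinder of points whose first `n` symbols are all `a`. -/
def powCyl (a : Fin 3) (n : ℕ) : Set Sig := {x | ∀ i < n, x i = a}

lemma isClopen_coord (i : ℕ) (a : Fin 3) : IsClopen {x : Sig | x i = a} :=
  (isClopen_discrete ({a} : Set (Fin 3))).preimage (continuous_apply i)

lemma isClopen_powCyl (a : Fin 3) (n : ℕ) : IsClopen (powCyl a n) := by
  have : powCyl a n = ⋂ i ∈ Finset.range n, {x : Sig | x i = a} := by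
    ext x; simp [powCyl]
  rw [this]
  exact isClopen_biInter_finset fun i _ => isClopen_coord i a

lemma isClopen_ringSet (a : Fin 3) (n : ℕ) : IsClopen (ringSet a n) := by
  have : ringSet a n = powCyl a n ∩ {x : Sig | x n = a}ᶜ := by
    ext x; simp [powCyl, ringSet]
  rw [this]
  exact (isClopen_powCyl a n).inter (isClopen_coord n a).compl

lemma cons_mem_ringSet (a b : Fin 3) (n : ℕ) (x : Sig) :
    cons b x ∈ ringSet a (n + 1) ↔ b = a ∧ x ∈ ringSet a n := by
  constructor
  · rintro ⟨h1, h2⟩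
    exact ⟨h1 0 (by omega), fun i hi => h1 (i + 1) (by omega), h2⟩
  · rintro ⟨rfl, h1, h2⟩
    refine ⟨fun i hi => ?_, h2⟩
    cases i with
    | zero => rfl
    | succ i => exact h1 i (by omega)

lemma cons_mem_powCyl (a b : Fin 3) (n : ℕ) (x : Sig) :
    cons b x ∈ powCyl a (n + 1) ↔ b = a ∧ x ∈ powCyl a n := by
  constructor
  · intro h1
    exact ⟨h1 0 (by omega), fun i hi => h1 (i + 1) (by omega)⟩
  · rintro ⟨rfl, h1⟩ i hi
    cases i with
    | zero => rfl
    | succ i => exact h1 i (by omega)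

lemma dist3_nonneg (x y : Sig) : 0 ≤ dist3 x y := by
  unfold dist3
  split_ifs <;> positivity

lemma dist3_ring (a : Fin 3) (n : ℕ) (x : Sig) (hx : x ∈ ringSet a n) :
    dist3 x (fun _ => a) = (1 / 2) ^ n := by
  have hne : x ≠ fun _ => a := fun h => hx.2 (by rw [h])
  unfold dist3
  rw [dif_pos hne]
  congr 1
  rw [Nat.find_eq_iff]
  exact ⟨hx.2, fun m hm => by simpa using hx.1 m hm⟩

lemma transfer_indicator (α β : ℝ) (a : Fin 3) (S T : Set Sig)
    (h : ∀ b x, cons b x ∈ S ↔ b = a ∧ x ∈ T) (x : Sig) :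
    transfer α β (S.indicator fun _ => 1) x
      = T.indicator (fun x => Real.exp (β * pot α (cons a x))) x := by
  classical
  unfold transfer
  rw [Finset.sum_eq_single a]
  · by_cases hx : x ∈ T
    · have : cons a x ∈ S := (h a x).2 ⟨rfl, hx⟩
      simp [hx, this]
    · have : cons a x ∉ S := fun h' => hx ((h a x).1 h').2
      simp [hx, this]
  · intro b _ hb
    have : cons b x ∉ S := fun h' => hb ((h b x).1 h').1
    simp [this]
  · simp

/-- The eigen-measure equation tested on the indicator of a clopen set `S` that is the image of `T`
under prepending `a`. -/
lemma eigen_indicator {α β P : ℝ} {ν : Measure Sig} (hE : IsEigenMeasure α β P ν)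
    (a : Fin 3) (S T : Set Sig) (hS : IsClopen S)
    (h : ∀ b x, cons b x ∈ S ↔ b = a ∧ x ∈ T) :
    ∫ x, T.indicator (fun x => Real.exp (β * pot α (cons a x))) x ∂ν
      = Real.exp P * ν.real S := by
  have h1 := hE.eigenMeas (S.indicator fun _ => 1)
    (hS.continuous_indicator continuous_const)
  simp_rw [transfer_indicator α β a S T h] at h1
  rw [h1, integral_indicator_const _ hS.isOpen.measurableSet]
  simp

/-- The part of the potential living on `[a]` is `-c · d(·, a^∞)`. -/
def IsWeight (α : ℝ) (a : Fin 3) (c : ℝ) : Prop :=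
  0 < c ∧ ∀ x : Sig, x 0 = a → pot α x = -(c * dist3 x fun _ => a)

lemma isWeight_zero (α : ℝ) : IsWeight α 0 1 := by
  refine ⟨one_pos, fun x hx => ?_⟩
  simp only [pot, hx, if_true, one_mul]
  rfl

lemma isWeight_one (α : ℝ) : IsWeight α 1 3 := by
  refine ⟨by norm_num, fun x hx => ?_⟩
  simp only [pot, hx, one_ne_zero, if_false, if_true]
  rfl

lemma ring_step {α β P : ℝ} {ν : Measure Sig} (hE : IsEigenMeasure α β P ν)
    {a : Fin 3} {c : ℝ} (hc : IsWeight α a c) (n : ℕ) :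
    Real.exp P * ν.real (ringSet a (n + 1))
      = Real.exp (-(c * β) / 2 ^ (n + 1)) * ν.real (ringSet a n) := by
  rw [← eigen_indicator hE a _ (ringSet a n) (isClopen_ringSet a (n + 1))
    (fun b x => cons_mem_ringSet a b n x)]
  have : (ringSet a n).indicator (fun x => Real.exp (β * pot α (cons a x)))
      = (ringSet a n).indicator (fun _ => Real.exp (-(c * β) / 2 ^ (n + 1))) := by
    refine Set.indicator_congr fun x hx => ?_
    rw [hc.2 _ rfl, dist3_ring a (n + 1) _ ((cons_mem_ringSet a a n x).2 ⟨rfl, hx⟩)]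
    congr 1
    rw [one_div, inv_pow]
    ring
  rw [this, integral_indicator_const _ (isClopen_ringSet a n).isOpen.measurableSet]
  simp [mul_comm]

lemma powCyl_step {α β P : ℝ} {ν : Measure Sig} (hβ : 0 < β) (hE : IsEigenMeasure α β P ν)
    {a : Fin 3} {c : ℝ} (hc : IsWeight α a c) (n : ℕ) :
    Real.exp P * ν.real (powCyl a (n + 1)) ≤ ν.real (powCyl a n) := by
  have := hE.prob
  rw [← eigen_indicator hE a _ (powCyl a n) (isClopen_powCyl a (n + 1))
    (fun b x => cons_mem_powCyl a b n x)]
  have h1 : ν.real (powCyl a n) = ∫ x, (powCyl a n).indicator (fun _ => (1 : ℝ)) x ∂ν := by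
    rw [integral_indicator_const _ (isClopen_powCyl a n).isOpen.measurableSet]; simp
  rw [h1]
  refine integral_mono_of_nonneg (ae_of_all _ fun x => ?_) ?_ (ae_of_all _ fun x => ?_)
  · exact Set.indicator_nonneg (fun _ _ => (Real.exp_pos _).le) x
  · exact (integrable_const 1).indicator (isClopen_powCyl a n).isOpen.measurableSet
  · refine Set.indicator_le_indicator ?_
    rw [Real.exp_le_one_iff, hc.2 _ rfl]
    have := mul_nonneg hβ.le (mul_nonneg hc.1.le (dist3_nonneg (cons a x) fun _ => a))
    linarith

/-- The rings exhaust the space up to the null set `{a^∞}`. -/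
lemma hasSum_ring {α β P : ℝ} {ν : Measure Sig} (hβ : 0 < β) (hE : IsEigenMeasure α β P ν)
    {a : Fin 3} {c : ℝ} (hc : IsWeight α a c) :
    HasSum (fun n => ν.real (ringSet a n)) 1 := by
  have := hE.prob
  rw [hasSum_iff_tendsto_nat_of_nonneg (fun n => measureReal_nonneg)]
  have h1 : ∀ n, ν.real (powCyl a n) ≤ Real.exp (-P) ^ n := by
    intro n
    induction n with
    | zero => simp
    | succ n ih =>
      have := powCyl_step hβ hE hc n
      rw [pow_succ', Real.exp_neg, ← div_eq_inv_mul, le_div_iff₀' (Real.exp_pos P), ← Real.exp_neg]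
      exact this.trans ih
  have h2 : ∀ n, ∑ i ∈ Finset.range n, ν.real (ringSet a i) = 1 - ν.real (powCyl a n) := by
    intro n
    induction n with
    | zero => simp [powCyl]
    | succ n ih =>
      rw [Finset.sum_range_succ, ih]
      have hd : powCyl a n = ringSet a n ∪ powCyl a (n + 1) := by
        ext x
        simp only [powCyl, ringSet, Set.mem_union, Set.mem_ofPred_eq, Nat.forall_lt_succ_right]
        tauto
      have hdis : Disjoint (ringSet a n) (powCyl a (n + 1)) := by
        rw [Set.disjoint_left]
        intro x hx hx'
        exact hx.2 (hx' n (by omega))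
      have := measureReal_union (μ := ν) hdis (isClopen_powCyl a (n + 1)).isOpen.measurableSet
      rw [← hd] at this
      linarith
  simp_rw [h2]
  have h3 : Tendsto (fun n => ν.real (powCyl a n)) atTop (𝓝 0) :=
    squeeze_zero (fun n => measureReal_nonneg) h1
      (tendsto_pow_atTop_nhds_zero_of_lt_one (Real.exp_pos _).le
        (by rw [Real.exp_lt_one_iff]; linarith [hE.P_pos]))
  simpa using h3.const_sub 1

lemma ring_formula {α β P : ℝ} {ν : Measure Sig} (hE : IsEigenMeasure α β P ν)
    {a : Fin 3} {c : ℝ} (hc : IsWeight α a c) (n : ℕ) :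
    ν.real (ringSet a n)
      = ν.real (ringSet a 0) * (Real.exp (-P) ^ n * Real.exp (-(c * β) + c * β / 2 ^ n)) := by
  induction n with
  | zero => simp
  | succ n ih =>
    have h := ring_step hE hc n
    have h' : ν.real (ringSet a (n + 1))
        = Real.exp (-P) * (Real.exp (-(c * β) / 2 ^ (n + 1)) * ν.real (ringSet a n)) := by
      rw [← h, ← mul_assoc, ← Real.exp_add]; simp
    have h2 : Real.exp (-(c * β) + c * β / 2 ^ (n + 1))
        = Real.exp (-(c * β) / 2 ^ (n + 1)) * Real.exp (-(c * β) + c * β / 2 ^ n) := by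
      rw [← Real.exp_add]; congr 1; rw [pow_succ]; ring
    rw [h', ih, h2]
    ring

/-- The series `∑_{n ≥ 1} e^{-nP} e^{b/2ⁿ}` differs from the geometric series
`∑_{n ≥ 1} e^{-nP} = 1/(e^P - 1)` by at most `b e^{b/2}`, since `e^x - 1 ≤ x e^x`. -/
lemma series_bound {P b S : ℝ} (hP : 0 < P) (hb : 0 < b)
    (hS : HasSum (fun n : ℕ => Real.exp (-P) ^ (n + 1) * Real.exp (b / 2 ^ (n + 1))) S) :
    1 / (Real.exp P - 1) ≤ S ∧ S ≤ 1 / (Real.exp P - 1) + b * Real.exp (b / 2) := by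
  have hq1 : Real.exp (-P) < 1 := by rw [Real.exp_lt_one_iff]; linarith
  have hg : HasSum (fun n : ℕ => Real.exp (-P) ^ (n + 1)) (1 / (Real.exp P - 1)) := by
    have := (hasSum_geometric_of_lt_one (Real.exp_pos _).le hq1).mul_left (Real.exp (-P))
    have e : Real.exp (-P) * (1 - Real.exp (-P))⁻¹ = 1 / (Real.exp P - 1) := by
      have h1 : Real.exp P - 1 ≠ 0 := by
        have := Real.add_one_lt_exp hP.ne'
        intro h; linarith
      rw [Real.exp_neg]
      have h2 := (Real.exp_pos P).ne'
      field_simp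
    rw [e] at this
    simpa only [← pow_succ'] using this
  have hh : HasSum (fun n : ℕ => b * Real.exp (b / 2) / 2 / 2 ^ n) (b * Real.exp (b / 2)) :=
    hasSum_geometric_two' _
  constructor
  · refine hasSum_le (fun n => ?_) hg hS
    exact le_mul_of_one_le_right (by positivity) (Real.one_le_exp (by positivity))
  · refine hasSum_le (fun n => ?_) hS (hg.add hh)
    set y := b / 2 ^ (n + 1) with hy
    have hy0 : 0 ≤ y := by positivity
    have hyb : y ≤ b / 2 := by
      rw [hy, pow_succ]
      apply div_le_div_of_nonneg_left hb.le (by norm_num)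
      have : (1 : ℝ) ≤ 2 ^ n := one_le_pow₀ (by norm_num)
      linarith
    have h1 : Real.exp y - 1 ≤ y * Real.exp y := by
      have := mul_le_mul_of_nonneg_right (Real.add_one_le_exp (-y)) (Real.exp_pos y).le
      rw [← Real.exp_add, neg_add_cancel, Real.exp_zero] at this
      nlinarith
    have h2 : y * Real.exp y ≤ y * Real.exp (b / 2) := by gcongr
    have h3 : b * Real.exp (b / 2) / 2 / 2 ^ n = y * Real.exp (b / 2) := by
      rw [hy, pow_succ]; field_simp
    have h4 : Real.exp (-P) ^ (n + 1) ≤ 1 := pow_le_one₀ (Real.exp_pos _).le hq1.le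
    have h5 : 0 ≤ Real.exp y - 1 := by linarith [Real.one_le_exp hy0]
    rw [h3]
    nlinarith

/-- The total mass identity `∑ ν[aⁿ*] = 1`, solved for the mass of `[a]`. -/
lemma symbol_eq {α β P : ℝ} {ν : Measure Sig} (hβ : 0 < β) (hE : IsEigenMeasure α β P ν)
    {a : Fin 3} {c : ℝ} (hc : IsWeight α a c) :
    ∃ E : ℝ, 0 ≤ E ∧ E ≤ c * β * Real.exp (c * β / 2) ∧
      1 - ν.real (ringSet a 0)
        = ν.real (ringSet a 0) * Real.exp (-(c * β)) * (1 / (Real.exp P - 1) + E) := by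
  have h := (hasSum_nat_add_iff' 1).2 (hasSum_ring hβ hE hc)
  rw [Finset.sum_range_one] at h
  have hs : ν.real (ringSet a 0) ≠ 0 := by
    intro h0
    have h1 : (fun n => ν.real (ringSet a (n + 1))) = fun _ => 0 := by
      ext n; rw [ring_formula hE hc, h0, zero_mul]
    rw [h1, h0] at h
    have := h.unique hasSum_zero
    norm_num at this
  set r := ν.real (ringSet a 0) with hr
  have hb : 0 < c * β := mul_pos hc.1 hβ
  have h2 : HasSum (fun n : ℕ => Real.exp (-P) ^ (n + 1) * Real.exp (c * β / 2 ^ (n + 1)))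
      ((r * Real.exp (-(c * β)))⁻¹ * (1 - r)) := by
    have hfun := h.mul_left (r * Real.exp (-(c * β)))⁻¹
    refine hfun.congr_fun fun n => ?_
    rw [ring_formula hE hc, Real.exp_add, ← hr]
    field_simp
  obtain ⟨hl, hu⟩ := series_bound hE.P_pos hb h2
  refine ⟨_ - 1 / (Real.exp P - 1), sub_nonneg.2 hl, by linarith, ?_⟩
  field_simp
  ring

lemma sum_eq {α β P : ℝ} {ν : Measure Sig} (hE : IsEigenMeasure α β P ν) :
    ν.real (ringSet 0 0) + ν.real (ringSet 1 0) = 1 + Real.exp (-P - α * β) := by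
  have := hE.prob
  have h2 : Real.exp P * ν.real {x | x 0 = 2} = Real.exp (-(α * β)) := by
    rw [← eigen_indicator hE 2 _ Set.univ (isClopen_coord 0 2)]
    · have : ∀ x, pot α (cons 2 x) = -α := fun x => by
        simp [pot, cons]
      simp [this, mul_comm]
    · intro b x; simp [cons]
  have h3 : ν.real {x | x 0 = 2} = Real.exp (-P - α * β) := by
    have : ν.real {x | x 0 = 2} = Real.exp (-P) * (Real.exp P * ν.real {x | x 0 = 2}) := by
      rw [← mul_assoc, ← Real.exp_add]; simp
    rw [this, h2, ← Real.exp_add]; congr 1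
  have h4 : ringSet 0 0 = {x : Sig | x 0 = 1} ∪ {x : Sig | x 0 = 2} := by
    ext x
    simp only [ringSet, Set.mem_union, Set.mem_ofPred_eq]
    generalize x 0 = y
    simp; revert y; decide
  have h5 : ringSet 1 0 = {x : Sig | x 0 = 1}ᶜ := by
    ext x
    simp [ringSet]
  have hd : Disjoint {x : Sig | x 0 = 1} {x : Sig | x 0 = 2} := by
    rw [Set.disjoint_left]; intro x hx hx'
    simp only [Set.mem_ofPred_eq] at hx hx'
    rw [hx] at hx'; exact absurd hx' (by decide)
  rw [h5, probReal_compl_eq_one_sub (isClopen_coord 0 1).isOpen.measurableSet, h4,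
    measureReal_union hd (isClopen_coord 0 2).isOpen.measurableSet, h3]
  ring

lemma ratio_eq {α β P : ℝ} {ν : Measure Sig} (hE : IsEigenMeasure α β P ν) :
    ν.real (ringSet 0 1) / ν.real (ringSet 1 1)
      = Real.exp β * ν.real (ringSet 0 0) / ν.real (ringSet 1 0) := by
  rw [ring_formula hE (isWeight_zero α) 1, ring_formula hE (isWeight_one α) 1]
  have h : Real.exp (-(1 * β) + 1 * β / 2 ^ 1) = Real.exp β * Real.exp (-(3 * β) + 3 * β / 2 ^ 1) := by
    rw [← Real.exp_add]; congr 1; ring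
  rw [h]
  have := (Real.exp_pos (-P)).ne'
  have := (Real.exp_pos (-(3 * β) + 3 * β / 2 ^ 1)).ne'
  rw [← mul_div_mul_right (Real.exp β * ν.real (ringSet 0 0)) (ν.real (ringSet 1 0))
    (mul_ne_zero (pow_ne_zero 1 ‹Real.exp (-P) ≠ 0›) this)]
  congr 1
  ring

/-! ### Asymptotics -/

/-- The relations between `P`, `s = 1 - ν[0]` and `t = 1 - ν[1]` at inverse temperature `β`;
`E₀` and `E₁` are the deviations from the geometric series for the symbols `0` and `1`. -/
structure EigenRel (α β P s t E₀ E₁ : ℝ) : Prop where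
  hP : 0 < P
  hs : 0 ≤ s
  ht : 0 ≤ t
  hs1 : s ≤ 1
  ht1 : t ≤ 1
  hE₀ : 0 ≤ E₀
  hE₀' : E₀ ≤ β * Real.exp (β / 2)
  hE₁ : 0 ≤ E₁
  hE₁' : E₁ ≤ 3 * β * Real.exp (3 * β / 2)
  eq₀ : 1 - s = s * Real.exp (-β) * (1 / (Real.exp P - 1) + E₀)
  eq₁ : 1 - t = t * Real.exp (-(3 * β)) * (1 / (Real.exp P - 1) + E₁)
  eq₂ : s + t = 1 + Real.exp (-P - α * β)

namespace EigenRel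

variable {α β P s t E₀ E₁ : ℝ}

lemma p_pos (h : EigenRel α β P s t E₀ E₁) : 0 < Real.exp P - 1 := by
  have := Real.add_one_lt_exp h.hP.ne'
  linarith [h.hP]

lemma s_pos (h : EigenRel α β P s t E₀ E₁) : 0 < s := by
  refine lt_of_le_of_ne h.hs fun h0 => ?_
  have := h.eq₀
  rw [← h0] at this; norm_num at this

lemma t_pos (h : EigenRel α β P s t E₀ E₁) : 0 < t := by
  refine lt_of_le_of_ne h.ht fun h0 => ?_
  have := h.eq₁
  rw [← h0] at this; norm_num at this

lemma eps_le (h : EigenRel α β P s t E₀ E₁) : Real.exp (-P - α * β) ≤ Real.exp (-(α * β)) :=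
  Real.exp_le_exp.2 (by linarith [h.hP])

lemma one_sub_t_le (h : EigenRel α β P s t E₀ E₁) :
    1 - t ≤ Real.exp (-(3 * β)) / (Real.exp P - 1) + 3 * β * Real.exp (-(3 * β / 2)) := by
  have hp := h.p_pos
  have h1 : 1 - t ≤ 1 * Real.exp (-(3 * β)) *
      (1 / (Real.exp P - 1) + 3 * β * Real.exp (3 * β / 2)) := by
    rw [h.eq₁]
    have := h.ht; have := h.ht1; have := h.hE₁; have := h.hE₁'
    gcongr
  have h2 : Real.exp (-(3 * β)) * Real.exp (3 * β / 2) = Real.exp (-(3 * β / 2)) := by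
    rw [← Real.exp_add]; congr 1; ring
  calc _ ≤ _ := h1
    _ = _ := by rw [← h2]; ring

lemma one_sub_s_le (h : EigenRel α β P s t E₀ E₁) :
    1 - s ≤ Real.exp (-β) / (Real.exp P - 1) + β * Real.exp (-(β / 2)) := by
  have hp := h.p_pos
  have h1 : 1 - s ≤ 1 * Real.exp (-β) *
      (1 / (Real.exp P - 1) + β * Real.exp (β / 2)) := by
    rw [h.eq₀]
    have := h.hs; have := h.hs1; have := h.hE₀; have := h.hE₀'
    gcongr
  have h2 : Real.exp (-β) * Real.exp (β / 2) = Real.exp (-(β / 2)) := by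
    rw [← Real.exp_add]; congr 1; ring
  calc _ ≤ _ := h1
    _ = _ := by rw [← h2]; ring

/-- `p = e^P - 1` is at most of order `e^{-β}`. -/
lemma p_le (h : EigenRel α β P s t E₀ E₁) (hβ : 0 < β) :
    (Real.exp P - 1) * (1 - Real.exp (-(α * β)) - β * Real.exp (-(β / 2))
      - 3 * β * Real.exp (-(3 * β / 2))) ≤ 2 * Real.exp (-β) := by
  have hp := h.p_pos
  have h1 := h.one_sub_s_le
  have h2 := h.one_sub_t_le
  have h3 := h.eq₂
  have h4 := h.eps_le
  have h5 : Real.exp (-(3 * β)) ≤ Real.exp (-β) := Real.exp_le_exp.2 (by linarith)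
  have h6 : 1 - Real.exp (-(α * β)) - β * Real.exp (-(β / 2))
      - 3 * β * Real.exp (-(3 * β / 2)) ≤ 2 * Real.exp (-β) / (Real.exp P - 1) := by
    have : Real.exp (-(3 * β)) / (Real.exp P - 1) ≤ Real.exp (-β) / (Real.exp P - 1) := by gcongr
    have e : 2 * Real.exp (-β) / (Real.exp P - 1)
      = Real.exp (-β) / (Real.exp P - 1) + Real.exp (-β) / (Real.exp P - 1) := by ring
    linarith
  rwa [le_div_iff₀' hp] at h6

lemma s_sq_le (h : EigenRel α β P s t E₀ E₁) (hβ : 0 < β) :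
    s ^ 2 ≤ Real.exp (-(2 * β)) + 3 * β * Real.exp (-(3 * β / 2)) + Real.exp (-(α * β)) := by
  have hp := h.p_pos
  have h2 := h.one_sub_t_le
  have h3 := h.eq₂
  have h4 := h.eps_le
  have h5 : s * Real.exp (-β) / (Real.exp P - 1) ≤ 1 := by
    have e := h.eq₀
    have : 0 ≤ s * Real.exp (-β) * E₀ := by
      have := h.hs; have := h.hE₀; positivity
    have e2 : s * Real.exp (-β) / (Real.exp P - 1)
      = s * Real.exp (-β) * (1 / (Real.exp P - 1) + E₀) - s * Real.exp (-β) * E₀ := by ring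
    linarith [h.hs]
  have h6 : s * (Real.exp (-(3 * β)) / (Real.exp P - 1)) ≤ Real.exp (-(2 * β)) := by
    have e : Real.exp (-(3 * β)) = Real.exp (-(2 * β)) * Real.exp (-β) := by
      rw [← Real.exp_add]; congr 1; ring
    calc s * (Real.exp (-(3 * β)) / (Real.exp P - 1))
        = Real.exp (-(2 * β)) * (s * Real.exp (-β) / (Real.exp P - 1)) := by rw [e]; ring
      _ ≤ Real.exp (-(2 * β)) * 1 := by gcongr
      _ = _ := mul_one _
  set A := Real.exp (-(3 * β)) / (Real.exp P - 1)
  set B := 3 * β * Real.exp (-(3 * β / 2)) + Real.exp (-(α * β)) with hB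
  have hB0 : 0 ≤ B := by positivity
  have h7 : s ≤ A + B := by rw [hB]; linarith
  have h8 : s * B ≤ B := mul_le_of_le_one_left hB0 h.hs1
  nlinarith [h.hs]

/-- The self-consistency relation satisfied by the ratio `R = e^β s / t`. -/
lemma ratio_relation (h : EigenRel α β P s t E₀ E₁) :
    Real.exp β * s / t
      = ((1 - s) / (t * (1 + (Real.exp P - 1) * E₀))) / (Real.exp β * s / t)
        + (Real.exp ((1 - α) * β) * (Real.exp (-P) / t) + Real.exp (-(2 * β)) * E₁) := by
  have hp := h.p_pos
  have hs := h.s_pos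
  have ht := h.t_pos
  have hq : 0 < 1 + (Real.exp P - 1) * E₀ := by
    have := mul_nonneg hp.le h.hE₀; linarith
  -- the first summand equals `e^{-2β} / p`
  have h1 : ((1 - s) / (t * (1 + (Real.exp P - 1) * E₀))) / (Real.exp β * s / t)
      = Real.exp (-(2 * β)) * (1 / (Real.exp P - 1)) := by
    rw [h.eq₀]
    have e : Real.exp (-(2 * β)) * Real.exp β = Real.exp (-β) := by
      rw [← Real.exp_add]; congr 1; ring
    rw [← e]
    have := (Real.exp_pos β).ne'
    field_simp
  have h2 : Real.exp ((1 - α) * β) * Real.exp (-P) = Real.exp β * Real.exp (-P - α * β) := by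
    rw [← Real.exp_add, ← Real.exp_add]; congr 1; ring
  have h3 : s = t * Real.exp (-(3 * β)) * (1 / (Real.exp P - 1) + E₁) + Real.exp (-P - α * β) := by
    rw [← h.eq₁]; linarith [h.eq₂]
  have h4 : Real.exp (-(2 * β)) = Real.exp β * Real.exp (-(3 * β)) := by
    rw [← Real.exp_add]; congr 1; ring
  rw [h1, ← mul_div_assoc (Real.exp ((1 - α) * β)), h2, h4, h3]
  generalize 1 / (Real.exp P - 1) = z
  field_simp
  ring

end EigenRel

lemma tendsto_exp_neg_mul {c : ℝ} (hc : 0 < c) :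
    Tendsto (fun β : ℝ => Real.exp (-(c * β))) atTop (𝓝 0) :=
  Real.tendsto_exp_neg_atTop_nhds_zero.comp (tendsto_id.const_mul_atTop hc)

lemma tendsto_mul_exp_neg_mul {c : ℝ} (hc : 0 < c) :
    Tendsto (fun β : ℝ => β * Real.exp (-(c * β))) atTop (𝓝 0) := by
  have h := (Real.tendsto_pow_mul_exp_neg_atTop_nhds_zero 1).comp (tendsto_id.const_mul_atTop hc)
  have h' := h.const_mul c⁻¹
  simp only [mul_zero] at h'
  refine h'.congr fun β => ?_
  simp only [Function.comp, id, pow_one]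
  field_simp

section family

variable {α : ℝ} {P s t E₀ E₁ : ℝ → ℝ}

lemma tendsto_s (hα : 0 < α) (h : ∀ β > 0, EigenRel α β (P β) (s β) (t β) (E₀ β) (E₁ β)) :
    Tendsto s atTop (𝓝 0) := by
  have hb : Tendsto (fun β : ℝ => Real.exp (-(2 * β)) + 3 * β * Real.exp (-(3 * β / 2))
      + Real.exp (-(α * β))) atTop (𝓝 0) := by
    have h1 := tendsto_exp_neg_mul (c := 2) (by norm_num)
    have h2 := (tendsto_mul_exp_neg_mul (c := 3 / 2) (by norm_num)).const_mul 3
    have h3 := tendsto_exp_neg_mul hα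
    have := (h1.add h2).add h3
    simp only [mul_zero, add_zero] at this
    refine this.congr fun β => ?_
    rw [show 3 / 2 * β = 3 * β / 2 by ring]
    ring
  have hsq : Tendsto (fun β => s β ^ 2) atTop (𝓝 0) := by
    refine squeeze_zero' (Eventually.of_forall fun β => sq_nonneg _) ?_ hb
    filter_upwards [eventually_gt_atTop 0] with β hβ using (h β hβ).s_sq_le hβ
  have := hsq.sqrt
  rw [Real.sqrt_zero] at this
  refine this.congr' ?_
  filter_upwards [eventually_gt_atTop 0] with β hβ using Real.sqrt_sq (h β hβ).hs

lemma tendsto_t (hα : 0 < α) (h : ∀ β > 0, EigenRel α β (P β) (s β) (t β) (E₀ β) (E₁ β)) :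
    Tendsto t atTop (𝓝 1) := by
  have h1 := (tendsto_s hα h).const_sub 1
  rw [sub_zero] at h1
  refine tendsto_of_tendsto_of_tendsto_of_le_of_le' h1 tendsto_const_nhds ?_ ?_
  · filter_upwards [eventually_gt_atTop 0] with β hβ
    linarith [(h β hβ).eq₂, Real.exp_pos (-P β - α * β)]
  · filter_upwards [eventually_gt_atTop 0] with β hβ using (h β hβ).ht1

lemma eventually_p_le (hα : 0 < α) (h : ∀ β > 0, EigenRel α β (P β) (s β) (t β) (E₀ β) (E₁ β)) :
    ∀ᶠ β in atTop, Real.exp (P β) - 1 ≤ 4 * Real.exp (-β) := by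
  have hb : Tendsto (fun β : ℝ => 1 - Real.exp (-(α * β)) - β * Real.exp (-(β / 2))
      - 3 * β * Real.exp (-(3 * β / 2))) atTop (𝓝 1) := by
    have h1 := tendsto_mul_exp_neg_mul (c := 1 / 2) (by norm_num)
    have h2 := (tendsto_mul_exp_neg_mul (c := 3 / 2) (by norm_num)).const_mul 3
    have h3 := tendsto_exp_neg_mul hα
    have := ((h3.const_sub 1).sub h1).sub h2
    simp only [mul_zero, sub_zero] at this
    refine this.congr fun β => ?_
    rw [show 3 / 2 * β = 3 * β / 2 by ring, show 1 / 2 * β = β / 2 by ring]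
    ring
  filter_upwards [eventually_gt_atTop 0, hb.eventually_const_le (show (1 / 2 : ℝ) < 1 by norm_num)]
    with β hβ h2
  have := (h β hβ).p_le hβ
  have := (h β hβ).p_pos
  nlinarith

lemma tendsto_exp_neg_P (hα : 0 < α) (h : ∀ β > 0, EigenRel α β (P β) (s β) (t β) (E₀ β) (E₁ β)) :
    Tendsto (fun β => Real.exp (-P β)) atTop (𝓝 1) := by
  have h1 : Tendsto (fun β => Real.exp (P β) - 1) atTop (𝓝 0) := by
    have h2 := (tendsto_exp_neg_mul (c := 1) one_pos).const_mul 4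
    simp only [one_mul, mul_zero] at h2
    refine squeeze_zero' ?_ (eventually_p_le hα h) h2
    filter_upwards [eventually_gt_atTop 0] with β hβ using (h β hβ).p_pos.le
  have h3 := (h1.add_const 1).inv₀ (by norm_num)
  simpa [Real.exp_neg] using h3

lemma tendsto_pE (hα : 0 < α) (h : ∀ β > 0, EigenRel α β (P β) (s β) (t β) (E₀ β) (E₁ β)) :
    Tendsto (fun β => (Real.exp (P β) - 1) * E₀ β) atTop (𝓝 0) := by
  have h2 := (tendsto_mul_exp_neg_mul (c := 1 / 2) (by norm_num)).const_mul 4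
  rw [mul_zero] at h2
  refine squeeze_zero' ?_ ?_ h2
  · filter_upwards [eventually_gt_atTop 0] with β hβ
    exact mul_nonneg (h β hβ).p_pos.le (h β hβ).hE₀
  · filter_upwards [eventually_gt_atTop 0, eventually_p_le hα h] with β hβ hp
    have e : Real.exp (-(1 / 2 * β)) = Real.exp (-β) * Real.exp (β / 2) := by
      rw [← Real.exp_add]; congr 1; ring
    calc _ ≤ (4 * Real.exp (-β)) * (β * Real.exp (β / 2)) :=
          mul_le_mul hp (h β hβ).hE₀' (h β hβ).hE₀ (by positivity)
      _ = _ := by rw [e]; ring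

/-- The numerator of the self-interaction term tends to `1`. -/
lemma tendsto_theta (hα : 0 < α) (h : ∀ β > 0, EigenRel α β (P β) (s β) (t β) (E₀ β) (E₁ β)) :
    Tendsto (fun β => (1 - s β) / (t β * (1 + (Real.exp (P β) - 1) * E₀ β))) atTop (𝓝 1) := by
  have := ((tendsto_s hα h).const_sub 1).div
    ((tendsto_t hα h).mul ((tendsto_pE hα h).const_add 1)) (by norm_num)
  simp only [sub_zero, add_zero, mul_one, div_one] at this
  exact this

lemma tendsto_delta (hα : 0 < α) (h : ∀ β > 0, EigenRel α β (P β) (s β) (t β) (E₀ β) (E₁ β)) :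
    Tendsto (fun β => Real.exp (-P β) / t β) atTop (𝓝 1) := by
  have := (tendsto_exp_neg_P hα h).div (tendsto_t hα h) one_ne_zero
  rw [div_one] at this
  exact this

lemma tendsto_eta (h : ∀ β > 0, EigenRel α β (P β) (s β) (t β) (E₀ β) (E₁ β)) :
    Tendsto (fun β => Real.exp (-(2 * β)) * E₁ β) atTop (𝓝 0) := by
  have h2 := (tendsto_mul_exp_neg_mul (c := 1 / 2) (by norm_num)).const_mul 3
  rw [mul_zero] at h2
  refine squeeze_zero' ?_ ?_ h2
  · filter_upwards [eventually_gt_atTop 0] with β hβ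
    exact mul_nonneg (Real.exp_pos _).le (h β hβ).hE₁
  · filter_upwards [eventually_gt_atTop 0] with β hβ
    have e : Real.exp (-(1 / 2 * β)) = Real.exp (-(2 * β)) * Real.exp (3 * β / 2) := by
      rw [← Real.exp_add]; congr 1; ring
    calc _ ≤ Real.exp (-(2 * β)) * (3 * β * Real.exp (3 * β / 2)) :=
          mul_le_mul_of_nonneg_left (h β hβ).hE₁' (Real.exp_pos _).le
      _ = _ := by rw [e]; ring

end family

/-- A positive solution of `R = θ/R + b` depends continuously on `θ` and `b`. -/
lemma tendsto_root {R θ b : ℝ → ℝ} {b₀ : ℝ} (hR : ∀ᶠ β in atTop, 0 < R β)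
    (heq : ∀ᶠ β in atTop, R β = θ β / R β + b β)
    (hθ : Tendsto θ atTop (𝓝 1)) (hb : Tendsto b atTop (𝓝 b₀)) :
    Tendsto R atTop (𝓝 ((b₀ + Real.sqrt (b₀ ^ 2 + 4)) / 2)) := by
  have h1 : Tendsto (fun β => (b β + Real.sqrt (b β ^ 2 + 4 * θ β)) / 2) atTop
      (𝓝 ((b₀ + Real.sqrt (b₀ ^ 2 + 4 * 1)) / 2)) :=
    (hb.add ((hb.pow 2).add (hθ.const_mul 4)).sqrt).div_const 2
  rw [mul_one] at h1
  refine h1.congr' ?_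
  filter_upwards [hR, heq, hθ.eventually_const_lt one_pos] with β h2 h3 h4
  have h5 : R β ^ 2 = θ β + b β * R β := by
    have : R β * R β = (θ β / R β + b β) * R β := by rw [← h3]
    rw [add_mul, div_mul_cancel₀ _ h2.ne'] at this
    linarith
  have h6 : 0 ≤ 2 * R β - b β := by
    have : 0 ≤ θ β / R β := by positivity
    linarith
  have h7 : b β ^ 2 + 4 * θ β = (2 * R β - b β) ^ 2 := by nlinarith
  rw [h7, Real.sqrt_sq h6]
  ring

/-- A positive solution of `R = θ/R + e^{κβ} δ + η` with `κ > 0` is asymptotic to `e^{κβ}`. -/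
lemma tendsto_large {R θ δ η : ℝ → ℝ} {κ : ℝ} (hκ : 0 < κ) (hR : ∀ᶠ β in atTop, 0 < R β)
    (heq : ∀ᶠ β in atTop, R β = θ β / R β + (Real.exp (κ * β) * δ β + η β))
    (hθ : Tendsto θ atTop (𝓝 1)) (hδ : Tendsto δ atTop (𝓝 1)) (hη : Tendsto η atTop (𝓝 0)) :
    Tendsto (fun β => 1 / β * Real.log (R β)) atTop (𝓝 κ) ∧ Tendsto R atTop atTop := by
  have hexp : Tendsto (fun β : ℝ => Real.exp (κ * β)) atTop atTop :=
    Real.tendsto_exp_atTop.comp (tendsto_id.const_mul_atTop hκ)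
  have hmain : Tendsto (fun β => Real.exp (κ * β) * δ β + η β) atTop atTop :=
    (hexp.atTop_mul_pos one_pos hδ).atTop_add hη
  have hRtop : Tendsto R atTop atTop := by
    refine tendsto_atTop_mono' _ ?_ hmain
    filter_upwards [hR, heq, hθ.eventually_const_lt one_pos] with β h1 h2 h3
    have : 0 ≤ θ β / R β := by positivity
    linarith
  refine ⟨?_, hRtop⟩
  have h1 : Tendsto (fun β => R β * Real.exp (-(κ * β))) atTop (𝓝 1) := by
    have hk := tendsto_exp_neg_mul hκ
    have := (((hθ.div_atTop hRtop).mul hk).add hδ).add (hη.mul hk)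
    simp only [mul_zero, zero_add, add_zero] at this
    refine this.congr' ?_
    filter_upwards [heq] with β h2
    have e : Real.exp (κ * β) * Real.exp (-(κ * β)) = 1 := by rw [← Real.exp_add]; simp
    calc _ = θ β / R β * Real.exp (-(κ * β)) + δ β * (Real.exp (κ * β) * Real.exp (-(κ * β)))
          + η β * Real.exp (-(κ * β)) := by rw [e, mul_one]
      _ = (θ β / R β + (Real.exp (κ * β) * δ β + η β)) * Real.exp (-(κ * β)) := by ring
      _ = _ := by rw [← h2]
  have h2 := (h1.log one_ne_zero).div_atTop tendsto_id
  have h3 := h2.add_const κ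
  rw [zero_add] at h3
  refine h3.congr' ?_
  filter_upwards [hR, eventually_gt_atTop 0] with β h4 h5
  rw [Real.log_mul h4.ne' (Real.exp_pos _).ne', Real.log_exp, id]
  field_simp
  ring

/-! ### The three regimes of `α` -/

/-- Limit of the ratio `ν_β[0*₀]/ν_β[1*₁]`: `1` if `α > 1`, `(1+√5)/2` if `α = 1`,
and if `0 < α < 1` it goes to `+∞` with exponential speed `1 − α`. -/
theorem eigenMeasure_ratio_stars (α : ℝ)
    (P : ℝ → ℝ) (ν : ℝ → Measure Sig)
    (hE : ∀ β > (0 : ℝ), IsEigenMeasure α β (P β) (ν β)) :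
    (1 < α → Tendsto (fun β => (ν β (ringSet 0 1)).toReal / (ν β (ringSet 1 1)).toReal)
      atTop (nhds 1)) ∧
    (α = 1 → Tendsto (fun β => (ν β (ringSet 0 1)).toReal / (ν β (ringSet 1 1)).toReal)
      atTop (nhds ((1 + Real.sqrt 5) / 2))) ∧
    (0 < α → α < 1 →
      Tendsto (fun β => (1 / β) *
          Real.log ((ν β (ringSet 0 1)).toReal / (ν β (ringSet 1 1)).toReal))
        atTop (nhds (1 - α)) ∧
      Tendsto (fun β => (ν β (ringSet 0 1)).toReal / (ν β (ringSet 1 1)).toReal)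
        atTop atTop) := by
  choose! E₀ hE₀ hE₀' heq₀ using fun β (hβ : 0 < β) => symbol_eq hβ (hE β hβ) (isWeight_zero α)
  choose! E₁ hE₁ hE₁' heq₁ using fun β (hβ : 0 < β) => symbol_eq hβ (hE β hβ) (isWeight_one α)
  have h : ∀ β > 0, EigenRel α β (P β) ((ν β).real (ringSet 0 0)) ((ν β).real (ringSet 1 0))
      (E₀ β) (E₁ β) := by
    intro β hβ
    have := (hE β hβ).prob
    exact
      { hP := (hE β hβ).P_pos
        hs := measureReal_nonneg
        ht := measureReal_nonneg
        hs1 := measureReal_le_one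
        ht1 := measureReal_le_one
        hE₀ := hE₀ β hβ
        hE₀' := by simpa using hE₀' β hβ
        hE₁ := hE₁ β hβ
        hE₁' := hE₁' β hβ
        eq₀ := by simpa using heq₀ β hβ
        eq₁ := heq₁ β hβ
        eq₂ := sum_eq (hE β hβ) }
  have hratio : ∀ β > 0, (ν β (ringSet 0 1)).toReal / (ν β (ringSet 1 1)).toReal
      = Real.exp β * (ν β).real (ringSet 0 0) / (ν β).real (ringSet 1 0) :=
    fun β hβ => ratio_eq (hE β hβ)
  have hpos : ∀ᶠ β in atTop, 0 < (ν β (ringSet 0 1)).toReal / (ν β (ringSet 1 1)).toReal := by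
    filter_upwards [eventually_gt_atTop 0] with β hβ
    rw [hratio β hβ]
    have := (h β hβ).s_pos
    have := (h β hβ).t_pos
    positivity
  have hrel : ∀ᶠ β in atTop, (ν β (ringSet 0 1)).toReal / (ν β (ringSet 1 1)).toReal
      = ((1 - (ν β).real (ringSet 0 0)) /
          ((ν β).real (ringSet 1 0) * (1 + (Real.exp (P β) - 1) * E₀ β))) /
          ((ν β (ringSet 0 1)).toReal / (ν β (ringSet 1 1)).toReal)
        + (Real.exp ((1 - α) * β) * (Real.exp (-P β) / (ν β).real (ringSet 1 0))
          + Real.exp (-(2 * β)) * E₁ β) := by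
    filter_upwards [eventually_gt_atTop 0] with β hβ
    rw [hratio β hβ]
    exact (h β hβ).ratio_relation
  refine ⟨fun hα => ?_, fun hα => ?_, fun hα0 hα1 => ?_⟩
  · have hα0 : 0 < α := by linarith
    have hb := ((tendsto_exp_neg_mul (c := α - 1) (by linarith)).mul (tendsto_delta hα0 h)).add
      (tendsto_eta h)
    simp only [zero_mul, add_zero, ← neg_mul, neg_sub] at hb
    have := tendsto_root hpos hrel (tendsto_theta hα0 h) (by simpa only [← neg_mul] using hb)
    have e : ((0 : ℝ) + Real.sqrt (0 ^ 2 + 4)) / 2 = 1 := by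
      rw [show (0 : ℝ) ^ 2 + 4 = 2 ^ 2 by norm_num, Real.sqrt_sq (by norm_num)]; norm_num
    rwa [e] at this
  · subst hα
    have hb := (tendsto_delta one_pos h).add (tendsto_eta h)
    rw [add_zero] at hb
    have := tendsto_root hpos hrel (tendsto_theta one_pos h) (by simpa using hb)
    rwa [show (1 : ℝ) ^ 2 + 4 = 5 by norm_num] at this
  · exact tendsto_large (by linarith) hpos hrel (tendsto_theta hα0 h) (tendsto_delta hα0 h)
      (tendsto_eta h)

end
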